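/- arXiv:2308.08080 — 2 statements merged into one kernel-verified Lean document; each statement's English description precedes it below -/
import Mathlib

section
/- In the tensor-triangulated adjunction setting described in the context, let G be an object of 𝒯 and suppose the unit 1_𝒮 belongs to ⟨f_*G⟩̄_n for some n ≥ 0. Then every object E of 𝒮 belongs to ⟨f_*(G ⊗ f^*E)⟩̄_n. -/
/-! An exact coproduct-preserving functor `Φ` sends `⟨G⟩̄ₙ` into `⟨Φ G⟩̄ₙ`: for `n = 1` because the
preimage under `Φ` of `⟨Φ G⟩̄₁` is closed under shifts, coproducts and retracts, and for larger `n`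
by induction along distinguished triangles. Applied to `Φ = - ⊗ E`, this turns `1 ∈ ⟨f_* G⟩̄ₙ` into
`E ≅ 1 ⊗ E ∈ ⟨f_* G ⊗ E⟩̄ₙ`, and the projection formula identifies the generator `f_* G ⊗ E` with
`f_*(G ⊗ f^* E)`. -/

open CategoryTheory Limits Pretriangulated MonoidalCategory

universe v u v₂ u₂

namespace Stmt

variable {C : Type u} [Category.{v} C]

/-- `X` is a retract (direct summand) of `Y`. -/
def IsRetract (X Y : C) : Prop := ∃ (i : X ⟶ Y) (p : Y ⟶ X), i ≫ p = 𝟙 X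

section Big

variable [HasZeroObject C] [Preadditive C] [HasShift C ℤ]
  [∀ n : ℤ, (shiftFunctor C n).Additive] [Pretriangulated C]

/-- The objects of `⟨G⟩̄₁`: the smallest collection of objects containing `G` that is
closed under shifts, arbitrary small coproducts, and direct summands (retracts). -/
def bigOne (G : C) : Set C :=
  ⋂₀ {S : Set C | G ∈ S ∧ (∀ X ∈ S, ∀ n : ℤ, (X⟦n⟧ : C) ∈ S) ∧
      (∀ (ι : Type v) (f : ι → C) (_ : HasCoproduct f), (∀ i, f i ∈ S) → (∐ f) ∈ S) ∧
      (∀ X Y : C, Y ∈ S → IsRetract X Y → X ∈ S)}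

/-- The objects of `⟨G⟩̄ₙ`: `⟨G⟩̄₀` consists of the objects isomorphic to `0`;
`⟨G⟩̄₁` is `bigOne G`; for `n ≥ 2`, `⟨G⟩̄ₙ` consists of the direct summands of objects `E`
fitting in a distinguished triangle `A ⟶ E ⟶ B ⟶ A⟦1⟧` with `A ∈ ⟨G⟩̄ₙ₋₁` and `B ∈ ⟨G⟩̄₁`. -/
def bigLevel (G : C) : ℕ → Set C
  | 0 => {X | IsZero X}
  | 1 => bigOne G
  | (n + 2) => {X | ∃ (E A B : C) (f : A ⟶ E) (g : E ⟶ B) (h : B ⟶ A⟦(1 : ℤ)⟧),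
      (Triangle.mk f g h ∈ distTriang C) ∧ A ∈ bigLevel G (n + 1) ∧ B ∈ bigOne G ∧
      IsRetract X E}

end Big

namespace IsRetract

lemma iff_nonempty_retract {X Y : C} : IsRetract X Y ↔ Nonempty (Retract X Y) :=
  ⟨fun ⟨i, p, h⟩ => ⟨⟨i, p, h⟩⟩, fun ⟨r⟩ => ⟨r.i, r.r, r.retract⟩⟩

lemma of_iso {X Y : C} (e : X ≅ Y) : IsRetract X Y :=
  iff_nonempty_retract.2 ⟨.ofIso e⟩

lemma trans {X Y Z : C} (hXY : IsRetract X Y) (hYZ : IsRetract Y Z) : IsRetract X Z := by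
  obtain ⟨r⟩ := iff_nonempty_retract.1 hXY
  obtain ⟨s⟩ := iff_nonempty_retract.1 hYZ
  exact iff_nonempty_retract.2 ⟨r.trans s⟩

lemma map {D : Type u₂} [Category.{v₂} D] (Φ : C ⥤ D) {X Y : C} (h : IsRetract X Y) :
    IsRetract (Φ.obj X) (Φ.obj Y) := by
  obtain ⟨r⟩ := iff_nonempty_retract.1 h
  exact iff_nonempty_retract.2 ⟨r.map Φ⟩

lemma isZero [HasZeroMorphisms C] {X Y : C} (h : IsRetract X Y) (hY : IsZero Y) : IsZero X := by
  obtain ⟨r⟩ := iff_nonempty_retract.1 h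
  exact .of_mono r.i hY

end IsRetract

/-- Closure of a collection of objects under the operations generating `⟨G⟩̄₁` from `G`: shifts,
small coproducts, and retracts. Only those coproducts that exist in `C` are considered, as in
`bigOne`. -/
structure IsBigOneClosed [HasShift C ℤ] (P : Set C) : Prop where
  shift_mem {X : C} (hX : X ∈ P) (n : ℤ) : (X⟦n⟧ : C) ∈ P
  coproduct_mem {ι : Type v} (f : ι → C) [HasCoproduct f] (hf : ∀ i, f i ∈ P) : (∐ f) ∈ P
  mem_of_isRetract {X Y : C} (hY : Y ∈ P) (r : IsRetract X Y) : X ∈ P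

lemma hasCoproduct_map {D : Type u₂} [Category.{v₂} D] (Φ : C ⥤ D) {ι : Type*} (f : ι → C)
    [HasCoproduct f] [PreservesColimit (Discrete.functor f) Φ] :
    HasCoproduct fun i => Φ.obj (f i) :=
  ⟨⟨_, isColimitCofanMkObjOfIsColimit Φ f _ (coproductIsCoproduct f)⟩⟩

lemma IsBigOneClosed.preimage {D : Type u₂} [Category.{v} D] [HasShift C ℤ] [HasShift D ℤ]
    {P : Set D} (hP : IsBigOneClosed P) (Φ : C ⥤ D) [Φ.CommShift ℤ]
    [∀ J : Type v, PreservesColimitsOfShape (Discrete J) Φ] :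
    IsBigOneClosed (Φ.obj ⁻¹' P) where
  shift_mem {X} hX n :=
    hP.mem_of_isRetract (hP.shift_mem hX n) (.of_iso ((Φ.commShiftIso n).app X))
  coproduct_mem f _ hf :=
    have := hasCoproduct_map Φ f
    hP.mem_of_isRetract (hP.coproduct_mem _ hf) (.of_iso (PreservesCoproduct.iso Φ f))
  mem_of_isRetract hY r := hP.mem_of_isRetract hY (r.map Φ)

section BigOne

variable [HasShift C ℤ]

lemma self_mem_bigOne (G : C) : G ∈ bigOne G := fun _ hP => hP.1

lemma bigOne_subset {G : C} {P : Set C} (hP : IsBigOneClosed P) (hG : G ∈ P) : bigOne G ⊆ P :=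
  fun _ hX => hX P ⟨hG, fun _ => hP.shift_mem, fun _ f _ => hP.coproduct_mem f,
    fun _ _ => hP.mem_of_isRetract⟩

lemma isBigOneClosed_bigOne (G : C) : IsBigOneClosed (bigOne G) where
  shift_mem hX n P hP := hP.2.1 _ (hX P hP) n
  coproduct_mem f hf hmem P hP := hP.2.2.1 _ f hf fun i => hmem i P hP
  mem_of_isRetract hY r P hP := hP.2.2.2 _ _ (hY P hP) r

lemma bigOne_subset_bigOne {G H : C} (hG : G ∈ bigOne H) : bigOne G ⊆ bigOne H :=
  bigOne_subset (isBigOneClosed_bigOne H) hG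

lemma mem_bigOne_of_iso {G H : C} (e : G ≅ H) : G ∈ bigOne H :=
  (isBigOneClosed_bigOne H).mem_of_isRetract (self_mem_bigOne H) (.of_iso e)

lemma map_mem_bigOne {D : Type u₂} [Category.{v} D] [HasShift D ℤ] (Φ : C ⥤ D)
    [Φ.CommShift ℤ] [∀ J : Type v, PreservesColimitsOfShape (Discrete J) Φ] {G X : C}
    (hX : X ∈ bigOne G) : Φ.obj X ∈ bigOne (Φ.obj G) :=
  bigOne_subset ((isBigOneClosed_bigOne (Φ.obj G)).preimage Φ) (self_mem_bigOne (Φ.obj G)) hX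

end BigOne

section BigLevel

variable [HasZeroObject C] [Preadditive C] [HasShift C ℤ]
  [∀ n : ℤ, (shiftFunctor C n).Additive] [Pretriangulated C]

lemma mem_bigLevel_of_isRetract {G X Y : C} : ∀ {n : ℕ},
    Y ∈ bigLevel G n → IsRetract X Y → X ∈ bigLevel G n
  | 0, hY, r => r.isZero hY
  | 1, hY, r => (isBigOneClosed_bigOne G).mem_of_isRetract hY r
  | _ + 2, ⟨E, A, B, f, g, h, hT, hA, hB, s⟩, r => ⟨E, A, B, f, g, h, hT, hA, hB, r.trans s⟩

lemma bigLevel_subset_bigLevel {G H : C} (hG : G ∈ bigOne H) :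
    ∀ n : ℕ, bigLevel G n ⊆ bigLevel H n
  | 0, _, hX => hX
  | 1, _, hX => bigOne_subset_bigOne hG hX
  | n + 2, _, ⟨E, A, B, f, g, h, hT, hA, hB, r⟩ =>
    ⟨E, A, B, f, g, h, hT, bigLevel_subset_bigLevel hG (n + 1) hA, bigOne_subset_bigOne hG hB, r⟩

lemma map_mem_bigLevel {D : Type u₂} [Category.{v} D] [HasZeroObject D] [Preadditive D]
    [HasShift D ℤ] [∀ n : ℤ, (shiftFunctor D n).Additive] [Pretriangulated D] (Φ : C ⥤ D)
    [Φ.CommShift ℤ] [Φ.IsTriangulated] [∀ J : Type v, PreservesColimitsOfShape (Discrete J) Φ]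
    {G : C} : ∀ {n : ℕ} {X : C},
    X ∈ bigLevel G n → Φ.obj X ∈ bigLevel (Φ.obj G) n
  | 0, _, hX => Φ.map_isZero hX
  | 1, _, hX => map_mem_bigOne Φ hX
  | _ + 2, _, ⟨_, _, _, _, _, _, hT, hA, hB, r⟩ =>
    ⟨_, _, _, _, _, _, Φ.map_distinguished _ hT, map_mem_bigLevel Φ hA, map_mem_bigOne Φ hB,
      r.map Φ⟩

lemma mem_bigLevel_tensor_of_unit_mem [MonoidalCategory C] {G : C} {n : ℕ}
    (h : 𝟙_ C ∈ bigLevel G n) (E : C) [(tensorRight E).CommShift ℤ]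
    [(tensorRight E).IsTriangulated]
    [∀ J : Type v, PreservesColimitsOfShape (Discrete J) (tensorRight E)] :
    E ∈ bigLevel (G ⊗ E) n :=
  mem_bigLevel_of_isRetract (map_mem_bigLevel (tensorRight E) h) (.of_iso (λ_ E).symm)

theorem statement7_general [MonoidalCategory C] [BraidedCategory C]
    {D : Type u₂} [Category.{v₂} D] [MonoidalCategoryStruct D] (F : C ⥤ D) (Fst : D ⥤ C)
    (proj : ∀ (A : C) (B : D), Nonempty ((A ⊗ Fst.obj B) ≅ Fst.obj (B ⊗ F.obj A)))
    (G : D) (n : ℕ) (hn : 𝟙_ C ∈ bigLevel (Fst.obj G) n)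
    (E : C) [(tensorRight E).CommShift ℤ] [(tensorRight E).IsTriangulated]
    [∀ J : Type v, PreservesColimitsOfShape (Discrete J) (tensorRight E)] :
    E ∈ bigLevel (Fst.obj (G ⊗ F.obj E)) n := by
  obtain ⟨e⟩ := proj E G
  have generator_mem : Fst.obj G ⊗ E ∈ bigOne (Fst.obj (G ⊗ F.obj E)) :=
    mem_bigOne_of_iso (β_ (Fst.obj G) E ≪≫ e)
  exact bigLevel_subset_bigLevel generator_mem n (mem_bigLevel_tensor_of_unit_mem hn E)

end BigLevel

section Adjunction

/- The tensor-triangulated adjunction setting: `S` (𝒮) and `T` (𝒯) are triangulated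
categories admitting all small coproducts, each equipped with a symmetric monoidal
structure whose tensoring endofunctors are exact and preserve small coproducts;
`F : S ⥤ T` (the functor `f^*`) is an exact strong monoidal functor preserving small
coproducts, with a right adjoint `Fst : T ⥤ S` (the functor `f_*`) which is exact and
preserves small coproducts, satisfying the projection formula
`A ⊗ f_*(B) ≅ f_*(B ⊗ f^*A)`. -/

variable {S : Type u} [Category.{v} S] {T : Type u₂} [Category.{v} T]
  [HasZeroObject S] [Preadditive S] [HasShift S ℤ]
  [∀ n : ℤ, (shiftFunctor S n).Additive] [Pretriangulated S] [HasCoproducts.{v} S]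
  [HasZeroObject T] [Preadditive T] [HasShift T ℤ]
  [∀ n : ℤ, (shiftFunctor T n).Additive] [Pretriangulated T] [HasCoproducts.{v} T]
  [MonoidalCategory S] [SymmetricCategory S] [MonoidalCategory T] [SymmetricCategory T]
  [∀ X : S, (tensorRight X).CommShift ℤ] [∀ X : S, (tensorRight X).IsTriangulated]
  [∀ (X : S) (J : Type v), PreservesColimitsOfShape (Discrete J) (tensorRight X)]
  [∀ X : T, (tensorRight X).CommShift ℤ] [∀ X : T, (tensorRight X).IsTriangulated]
  [∀ (X : T) (J : Type v), PreservesColimitsOfShape (Discrete J) (tensorRight X)]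
  (F : S ⥤ T) [F.Monoidal] [F.CommShift ℤ] [F.IsTriangulated]
  [∀ J : Type v, PreservesColimitsOfShape (Discrete J) F]
  (Fst : T ⥤ S) [Fst.CommShift ℤ] [Fst.IsTriangulated]
  [∀ J : Type v, PreservesColimitsOfShape (Discrete J) Fst]

/--
in the tensor-triangulated adjunction setting, if `G` is an object of 𝒯
and the unit `1_𝒮` belongs to `⟨f_* G⟩̄ₙ` for some `n ≥ 0`, then every object `E` of 𝒮
belongs to `⟨f_*(G ⊗ f^* E)⟩̄ₙ`.
-/
theorem statement7 (adj : F ⊣ Fst)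
    (proj : ∀ (A : S) (B : T), Nonempty ((A ⊗ Fst.obj B) ≅ Fst.obj (B ⊗ F.obj A)))
    (G : T) (n : ℕ) (hn : (𝟙_ S) ∈ bigLevel (Fst.obj G) n) (E : S) :
    E ∈ bigLevel (Fst.obj (G ⊗ F.obj E)) n :=
  statement7_general F Fst proj G n hn E

end Adjunction

end Stmt
end

section
/- Let 𝒯 be a triangulated category and let G, H be objects of 𝒯. If A belongs to ⟨G⟩_n and B belongs to ⟨H⟩_m, then the direct sum A ⊕ B belongs to ⟨G ⊕ H⟩_{max{n,m}}. -/
/-!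
Write `⟨G⟩ₙ * ⟨G⟩₁` for the extensions of objects of `⟨G⟩₁` by objects of `⟨G⟩ₙ`, so that for
`n ≥ 1` the collection `⟨G⟩ₙ₊₁` is the closure of `⟨G⟩ₙ * ⟨G⟩₁` under retracts. A product of
distinguished triangles is distinguished, so extension products and retract closures inherit closure
under products, and every `⟨K⟩ₙ` is closed under direct sums. Both `A` and `B` lie in
`⟨G ⊞ H⟩_{max n m}`, because `G` and `H` are retracts of `G ⊞ H` and `⟨K⟩ₙ` increases with `n`.
-/

open CategoryTheory Limits Pretriangulated MonoidalCategory

universe v u v₂ u₂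

namespace Stmt

variable {C : Type u} [Category.{v} C]

section Classical

variable [HasZeroObject C] [Preadditive C] [HasShift C ℤ]
  [∀ n : ℤ, (shiftFunctor C n).Additive] [Pretriangulated C] [HasBinaryBiproducts C]

/-- The objects of `⟨G⟩₁`: the smallest collection of objects containing `G` that is
closed under shifts, finite coproducts, and direct summands (retracts).
(Closure under finite coproducts amounts to closure under binary direct sums, since the
empty coproduct `0` is a retract of any object.) -/
def classOne (G : C) : Set C :=
  ⋂₀ {S : Set C | G ∈ S ∧ (∀ X ∈ S, ∀ n : ℤ, (X⟦n⟧ : C) ∈ S) ∧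
      (∀ X Y : C, X ∈ S → Y ∈ S → (X ⊞ Y) ∈ S) ∧
      (∀ X Y : C, Y ∈ S → IsRetract X Y → X ∈ S)}

/-- The objects of `⟨G⟩ₙ`: `⟨G⟩₀` consists of the objects isomorphic to `0`;
`⟨G⟩₁` is `classOne G`; for `n ≥ 2`, `⟨G⟩ₙ` consists of the direct summands of objects `E`
fitting in a distinguished triangle `A ⟶ E ⟶ B ⟶ A⟦1⟧` with `A ∈ ⟨G⟩ₙ₋₁` and `B ∈ ⟨G⟩₁`. -/
def classLevel (G : C) : ℕ → Set C
  | 0 => {X | IsZero X}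
  | 1 => classOne G
  | (n + 2) => {X | ∃ (E A B : C) (f : A ⟶ E) (g : E ⟶ B) (h : B ⟶ A⟦(1 : ℤ)⟧),
      (Triangle.mk f g h ∈ distTriang C) ∧ A ∈ classLevel G (n + 1) ∧ B ∈ classOne G ∧
      IsRetract X E}

end Classical

theorem isRetract_iff_nonempty_retract {X Y : C} : IsRetract X Y ↔ Nonempty (Retract X Y) :=
  ⟨fun ⟨i, r, h⟩ ↦ ⟨⟨i, r, h⟩⟩, fun ⟨h⟩ ↦ ⟨h.i, h.r, h.retract⟩⟩

section Products

instance isClosedUnderLimitsOfShape_isZero {J : Type*} [Category* J] [HasZeroMorphisms C] :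
    ObjectProperty.IsClosedUnderLimitsOfShape (IsZero (C := C)) J where
  limitsOfShape_le := by
    rintro X ⟨p⟩
    rw [IsZero.iff_id_eq_zero]
    exact p.isLimit.hom_ext fun j ↦ (p.prop_diag_obj j).eq_of_tgt _ _

variable {J : Type*} (P Q : ObjectProperty C)

theorem prop_biprod [HasZeroMorphisms C] [P.IsClosedUnderBinaryProducts] {X Y : C}
    [HasBinaryBiproduct X Y] (hX : P X) (hY : P Y) : P (X ⊞ Y) :=
  P.prop_of_isLimit_binaryFan (BinaryBiproduct.isLimit X Y) hX hY

variable {P} in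
theorem isClosedUnderBinaryProducts_of_biprod [HasZeroMorphisms C] [HasBinaryBiproducts C]
    [P.IsClosedUnderIsomorphisms] (h : ∀ X Y : C, P X → P Y → P (X ⊞ Y)) :
    P.IsClosedUnderBinaryProducts := by
  refine .mk' ?_
  rintro _ ⟨F, hF⟩
  exact P.prop_of_iso (biprod.isoProd _ _ ≪≫ (HasLimit.isoOfNatIso (diagramIsoPair F)).symm)
    (h _ _ (hF ⟨.left⟩) (hF ⟨.right⟩))

variable {P} in
theorem isClosedUnderLimitsOfShape_discrete_of_pi [HasProductsOfShape J C]
    [P.IsClosedUnderIsomorphisms] (h : ∀ X : J → C, (∀ j, P (X j)) → P (∏ᶜ X)) :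
    P.IsClosedUnderLimitsOfShape (Discrete J) := by
  refine .mk' ?_
  rintro _ ⟨F, hF⟩
  exact P.prop_of_iso (Pi.isoLimit F) (h _ fun j ↦ hF ⟨j⟩)

instance isClosedUnderLimitsOfShape_retractClosure [HasProductsOfShape J C]
    [P.IsClosedUnderLimitsOfShape (Discrete J)] :
    P.retractClosure.IsClosedUnderLimitsOfShape (Discrete J) := by
  refine isClosedUnderLimitsOfShape_discrete_of_pi fun X hX ↦ ?_
  choose Y hY r using hX
  let hXY : Retract (∏ᶜ X) (∏ᶜ Y) :=
    { i := Limits.Pi.map fun j ↦ (r j).some.i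
      r := Limits.Pi.map fun j ↦ (r j).some.r }
  exact ObjectProperty.prop_retractClosure (P.prop_pi Y hY) hXY

variable [HasZeroObject C] [Preadditive C] [HasShift C ℤ]
  [∀ n : ℤ, (shiftFunctor C n).Additive] [Pretriangulated C]

instance isClosedUnderLimitsOfShape_extensionProduct [HasProductsOfShape J C]
    [P.IsClosedUnderLimitsOfShape (Discrete J)] [Q.IsClosedUnderLimitsOfShape (Discrete J)] :
    (P.extensionProduct Q).IsClosedUnderLimitsOfShape (Discrete J) := by
  refine isClosedUnderLimitsOfShape_discrete_of_pi fun X hX ↦ ?_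
  choose A B f g h hT hA hB using hX
  exact ⟨_, _, _, _, _,
    productTriangle_distinguished (fun j ↦ Triangle.mk (f j) (g j) (h j)) hT,
    P.prop_pi A hA, Q.prop_pi B hB⟩

end Products

section Level

open ObjectProperty

variable [HasZeroObject C] [Preadditive C] [HasShift C ℤ]
  [∀ n : ℤ, (shiftFunctor C n).Additive] [Pretriangulated C]

/-- The collection `⟨G⟩ₙ` as a property of objects, which gives access to Mathlib's closure
conditions, retract closures and extension products. -/
def level (G : C) (n : ℕ) : ObjectProperty C := fun X ↦ X ∈ classLevel G n

theorem level_one_self (G : C) : level G 1 G := fun _ hS ↦ hS.1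

instance isStableUnderRetracts_level_one (G : C) : (level G 1).IsStableUnderRetracts where
  of_retract r hY := fun S hS ↦
    hS.2.2.2 _ _ (hY S hS) (isRetract_iff_nonempty_retract.2 ⟨r⟩)

instance isStableUnderShift_level_one (G : C) : (level G 1).IsStableUnderShift ℤ where
  isStableUnderShiftBy n := ⟨fun X hX S hS ↦ hS.2.1 X (hX S hS) n⟩

instance isClosedUnderBinaryProducts_level_one (G : C) :
    (level G 1).IsClosedUnderBinaryProducts :=
  isClosedUnderBinaryProducts_of_biprod fun X Y hX hY S hS ↦ hS.2.2.1 X Y (hX S hS) (hY S hS)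

instance containsZero_level_one (G : C) : (level G 1).ContainsZero where
  exists_zero := ⟨_, isZero_zero C,
    prop_of_retract _ ((isZero_zero C).retract G) (level_one_self G)⟩

theorem level_one_le_iff {G : C} {P : ObjectProperty C} [P.IsStableUnderRetracts]
    [P.IsStableUnderShift ℤ] [P.IsClosedUnderBinaryProducts] : level G 1 ≤ P ↔ P G :=
  ⟨fun h ↦ h G (level_one_self G), fun hG _ hX ↦ hX {X | P X}
    ⟨hG, fun X hX n ↦ P.le_shift n X hX, fun _ _ ↦ prop_biprod P,
      fun _ _ hY h ↦ P.prop_of_retract (isRetract_iff_nonempty_retract.1 h).some hY⟩⟩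

theorem level_add_two (G : C) (n : ℕ) :
    level G (n + 2) = ((level G (n + 1)).extensionProduct (level G 1)).retractClosure := by
  ext X
  constructor
  · rintro ⟨E, A, B, f, g, h, hT, hA, hB, hX⟩
    exact ⟨E, ⟨A, B, f, g, h, hT, hA, hB⟩, isRetract_iff_nonempty_retract.1 hX⟩
  · rintro ⟨E, ⟨A, B, f, g, h, hT, hA, hB⟩, hX⟩
    exact ⟨E, A, B, f, g, h, hT, hA, hB, isRetract_iff_nonempty_retract.2 hX⟩

instance isClosedUnderBinaryProducts_level (G : C) :
    ∀ n : ℕ, (level G n).IsClosedUnderBinaryProducts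
  | 0 => inferInstanceAs (IsClosedUnderBinaryProducts IsZero)
  | 1 => isClosedUnderBinaryProducts_level_one G
  | n + 2 => by
    have := isClosedUnderBinaryProducts_level G (n + 1)
    rw [level_add_two]
    infer_instance

theorem level_mono_left {G K : C} (hG : level K 1 G) : ∀ n : ℕ, level G n ≤ level K n
  | 0 => le_rfl
  | 1 => level_one_le_iff.2 hG
  | n + 2 => by
    rw [level_add_two, level_add_two]
    exact monotone_retractClosure <|
      (monotone_extensionProduct_left _ (level_mono_left hG (n + 1))).trans
        (monotone_extensionProduct_right _ (level_one_le_iff.2 hG))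

theorem level_le_succ (G : C) : ∀ n : ℕ, level G n ≤ level G (n + 1)
  | 0 => fun _ hX ↦ (level G 1).prop_of_isZero hX
  | n + 1 => by
    rw [level_add_two]
    exact (le_extensionProduct_left _).trans (le_retractClosure _)

theorem monotone_level (G : C) : Monotone (level G) :=
  monotone_nat_of_le_succ (level_le_succ G)

end Level

/--
in a triangulated category, if `A ∈ ⟨G⟩ₙ` and `B ∈ ⟨H⟩ₘ`, then
`A ⊕ B ∈ ⟨G ⊕ H⟩_{max n m}`.
-/
theorem statement11 [HasZeroObject C] [Preadditive C] [HasShift C ℤ]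
    [∀ n : ℤ, (shiftFunctor C n).Additive] [Pretriangulated C] [HasBinaryBiproducts C]
    (G H : C) (n m : ℕ) (A B : C) (hA : A ∈ classLevel G n) (hB : B ∈ classLevel H m) :
    (A ⊞ B) ∈ classLevel (G ⊞ H) (max n m) := by
  have hG : level (G ⊞ H) 1 G :=
    ObjectProperty.IsStableUnderRetracts.of_biprod_left _ (level_one_self (G ⊞ H))
  have hH : level (G ⊞ H) 1 H :=
    ObjectProperty.IsStableUnderRetracts.of_biprod_right _ (level_one_self (G ⊞ H))
  have hA' : level (G ⊞ H) (max n m) A :=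
    monotone_level _ (le_max_left n m) A (level_mono_left hG n A hA)
  have hB' : level (G ⊞ H) (max n m) B :=
    monotone_level _ (le_max_right n m) B (level_mono_left hH m B hB)
  exact prop_biprod (level (G ⊞ H) (max n m)) hA' hB'

end Stmt
end
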